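/- Every parabolic subalgebra q of a finite-dimensional complex reductive Lie algebra g is equal to the normalizer in g of its own nilpotent radical. -/

import Mathlib

open Module

namespace ManinPaper

variable (g : Type*) [LieRing g] [LieAlgebra ℝ g] [LieAlgebra ℂ g] [IsScalarTower ℝ ℂ g]
  [FiniteDimensional ℂ g] [FiniteDimensional ℝ g]

/-! ### Subalgebras of `g`, given as subspaces -/

def IsSub (V : Submodule ℂ g) : Prop := ∀ x ∈ V, ∀ y ∈ V, ⁅x, y⁆ ∈ V

def IsSubR (V : Submodule ℝ g) : Prop := ∀ x ∈ V, ∀ y ∈ V, ⁅x, y⁆ ∈ V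

/-- The span of all brackets. -/
def bracketSpan (V W : Submodule ℂ g) : Submodule ℂ g :=
  Submodule.span ℂ {z : g | ∃ x ∈ V, ∃ y ∈ W, ⁅x, y⁆ = z}

def bracketSpanR (V W : Submodule ℝ g) : Submodule ℝ g :=
  Submodule.span ℝ {z : g | ∃ x ∈ V, ∃ y ∈ W, ⁅x, y⁆ = z}

/-- Derived series of a subalgebra (given as a subspace). -/
def derivedSub (V : Submodule ℂ g) : ℕ → Submodule ℂ g
  | 0 => V
  | k + 1 => bracketSpan g (derivedSub V k) (derivedSub V k)

def derivedSubR (V : Submodule ℝ g) : ℕ → Submodule ℝ g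
  | 0 => V
  | k + 1 => bracketSpanR g (derivedSubR V k) (derivedSubR V k)

/-- Lower central series. -/
def lcsSub (V : Submodule ℂ g) : ℕ → Submodule ℂ g
  | 0 => V
  | k + 1 => bracketSpan g V (lcsSub V k)

def lcsSubR (V : Submodule ℝ g) : ℕ → Submodule ℝ g
  | 0 => V
  | k + 1 => bracketSpanR g V (lcsSubR V k)

def SolvableSub (V : Submodule ℂ g) : Prop := ∃ k, derivedSub g V k = ⊥

def SolvableSubR (V : Submodule ℝ g) : Prop := ∃ k, derivedSubR g V k = ⊥

def NilpotentSub (V : Submodule ℂ g) : Prop := ∃ k, lcsSub g V k = ⊥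

def NilpotentSubR (V : Submodule ℝ g) : Prop := ∃ k, lcsSubR g V k = ⊥

/-- `J` is an ideal of the subalgebra `V`. -/
def IsIdealIn (V J : Submodule ℂ g) : Prop :=
  J ≤ V ∧ ∀ x ∈ V, ∀ y ∈ J, ⁅x, y⁆ ∈ J

def IsIdealInR (V J : Submodule ℝ g) : Prop :=
  J ≤ V ∧ ∀ x ∈ V, ∀ y ∈ J, ⁅x, y⁆ ∈ J

/-- The radical (largest solvable ideal) of the subalgebra `V`. -/
def radicalIn (V : Submodule ℂ g) : Submodule ℂ g :=
  sSup {J : Submodule ℂ g | IsIdealIn g V J ∧ SolvableSub g J}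

def radicalInR (V : Submodule ℝ g) : Submodule ℝ g :=
  sSup {J : Submodule ℝ g | IsIdealInR g V J ∧ SolvableSubR g J}

/-- The nilpotent radical `[V,V] ⊓ rad V` of the subalgebra `V`; by Bourbaki, Ch. I §5.3,
this is the largest ideal of `V` whose elements act nilpotently in every finite-dimensional
representation of `V`. -/
def nilpotentRadIn (V : Submodule ℂ g) : Submodule ℂ g :=
  bracketSpan g V V ⊓ radicalIn g V

def nilpotentRadInR (V : Submodule ℝ g) : Submodule ℝ g :=
  bracketSpanR g V V ⊓ radicalInR g V

/-- The centre of the subalgebra `V`. -/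
def centerIn (V : Submodule ℂ g) : Submodule ℂ g where
  carrier := {z : g | z ∈ V ∧ ∀ y ∈ V, ⁅z, y⁆ = 0}
  zero_mem' := ⟨V.zero_mem, fun y _ => zero_lie y⟩
  add_mem' := by
    rintro a b ⟨ha, ha'⟩ ⟨hb, hb'⟩
    exact ⟨V.add_mem ha hb, fun y hy => by rw [add_lie, ha' y hy, hb' y hy, add_zero]⟩
  smul_mem' := by
    rintro c x ⟨hx, hx'⟩
    exact ⟨V.smul_mem c hx, fun y hy => by rw [smul_lie, hx' y hy, smul_zero]⟩

/-- The centralizer of a set. -/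
def centralizerOf (s : Set g) : Submodule ℂ g where
  carrier := {z : g | ∀ y ∈ s, ⁅z, y⁆ = 0}
  zero_mem' := fun y _ => zero_lie y
  add_mem' := by
    rintro a b ha hb
    exact fun y hy => by rw [add_lie, ha y hy, hb y hy, add_zero]
  smul_mem' := by
    rintro c x hx
    exact fun y hy => by rw [smul_lie, hx y hy, smul_zero]

/-- The derived (sub)algebra of `V`, as a subspace of `g`. -/
def derivedOf (V : Submodule ℂ g) : Submodule ℂ g := bracketSpan g V V

/-- A semisimple complex subalgebra: a subalgebra with trivial radical. -/
def SemisimpleSub (V : Submodule ℂ g) : Prop := IsSub g V ∧ radicalIn g V = ⊥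

/-- Borel subalgebras of the subalgebra `W`: maximal solvable subalgebras of `W`. -/
def IsBorelIn (W b : Submodule ℂ g) : Prop :=
  IsSub g b ∧ b ≤ W ∧ SolvableSub g b ∧
    ∀ b' : Submodule ℂ g, IsSub g b' → b' ≤ W → SolvableSub g b' → b ≤ b' → b' = b

/-- Parabolic subalgebras of `W`: subalgebras of `W` containing a Borel subalgebra of `W`. -/
def IsParabolicIn (W p : Submodule ℂ g) : Prop :=
  IsSub g p ∧ p ≤ W ∧ ∃ b : Submodule ℂ g, IsBorelIn g W b ∧ b ≤ p

/-- `l` is reductive in `W`: every `l`-invariant subspace of `W` admits an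
`l`-invariant complement in `W`. -/
def ReductiveIn (W l : Submodule ℂ g) : Prop :=
  ∀ U : Submodule ℂ g, U ≤ W → (∀ x ∈ l, ∀ u ∈ U, ⁅x, u⁆ ∈ U) →
    ∃ U' : Submodule ℂ g, U' ≤ W ∧ (∀ x ∈ l, ∀ u ∈ U', ⁅x, u⁆ ∈ U') ∧
      U ⊓ U' = ⊥ ∧ U ⊔ U' = W

/-- A Langlands decomposition `p = l ⊕ n` of the parabolic subalgebra `p` of `W`, where
`n` is the nilpotent radical of `p` and `l` is a subalgebra reductive in `W`. -/
def IsLanglandsIn (W p l : Submodule ℂ g) : Prop :=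
  IsSub g l ∧ l ≤ p ∧ ReductiveIn g W l ∧
    l ⊓ nilpotentRadIn g p = ⊥ ∧ l ⊔ nilpotentRadIn g p = p

/-- Cartan subalgebras of `W`: nilpotent and self-normalizing in `W`. -/
def IsCartanIn (W j : Submodule ℂ g) : Prop :=
  IsSub g j ∧ j ≤ W ∧ NilpotentSub g j ∧
    ∀ x ∈ W, (∀ y ∈ j, ⁅x, y⁆ ∈ j) → x ∈ j

def IsCartanInR (W j : Submodule ℝ g) : Prop :=
  IsSubR g j ∧ j ≤ W ∧ NilpotentSubR g j ∧
    ∀ x ∈ W, (∀ y ∈ j, ⁅x, y⁆ ∈ j) → x ∈ j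

/-- `g` is reductive: its radical coincides with its centre. -/
def IsReductive : Prop := radicalIn g ⊤ = centerIn g ⊤

/-- `b'` is the Borel subalgebra of `W` opposite to `b` relative to the Cartan
subalgebra `j`. -/
def IsOppositeBorelIn (W j b b' : Submodule ℂ g) : Prop :=
  IsBorelIn g W b' ∧ j ≤ b' ∧ b ⊓ b' = j

section generic
open LieAlgebra LieModule

theorem lieRad_nilp_aux.{u, v} {L : Type v} [LieRing L] [LieAlgebra ℂ L]
    (A : LieIdeal ℂ L) [IsSolvable A] (x y : L) (a : L) (ha : a ∈ A) (n : ℕ) :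
    ∀ (V : Type u) [AddCommGroup V] [Module ℂ V] [LieRingModule L V] [LieModule ℂ L V]
      [FiniteDimensional ℂ V], finrank ℂ V ≤ n →
      ∃ k, ∀ v : V, ((toEnd ℂ L V x ∘ₗ toEnd ℂ L V ⁅y, a⁆) ^ k) v = 0 := by
  induction n with
  | zero =>
    intro V _ _ _ _ _ h
    have : Subsingleton V := (finrank_zero_iff (R := ℂ)).mp (by omega)
    exact ⟨0, fun v => Subsingleton.elim _ _⟩
  | succ n ih =>
    intro V _ _ _ _ _ h
    rcases subsingleton_or_nontrivial V with hV | hV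
    · exact ⟨0, fun v => Subsingleton.elim _ _⟩
    obtain ⟨χ, hχ⟩ : ∃ χ : Module.Dual ℂ A, Nontrivial (weightSpace V χ) :=
      exists_nontrivial_weightSpace_of_isSolvable ℂ A V
    let W : LieSubmodule ℂ L V := weightSpaceOfIsLieTower ℂ V χ
    have hW : Nontrivial W := hχ
    have hm : ∀ m ∈ W, ∀ (b : L) (hb : b ∈ A), ⁅b, m⁆ = χ ⟨b, hb⟩ • m := by
      intro m hm
      simpa [W, weightSpaceOfIsLieTower, mem_weightSpace] using hm
    have hkill : ∀ m ∈ W, ⁅⁅y, a⁆, m⁆ = 0 := by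
      intro m hmW
      rw [lie_lie, hm m hmW a ha, hm _ (W.lie_mem hmW) a ha, lie_smul, sub_self]
    have hlt : finrank ℂ (V ⧸ W) ≤ n := by
      have h1 := Submodule.finrank_quotient_add_finrank W.toSubmodule
      have h2 : 0 < finrank ℂ W.toSubmodule := finrank_pos_iff.mpr hW
      have h3 : finrank ℂ (V ⧸ W) = finrank ℂ (V ⧸ W.toSubmodule) := rfl
      omega
    have : FiniteDimensional ℂ (V ⧸ W) :=
      inferInstanceAs (FiniteDimensional ℂ (V ⧸ W.toSubmodule))
    obtain ⟨k, hk⟩ := ih (V ⧸ W) hlt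
    have hcomm : ∀ (k : ℕ) (v : V), LieSubmodule.Quotient.mk' W
        (((toEnd ℂ L V x ∘ₗ toEnd ℂ L V ⁅y, a⁆) ^ k) v) =
        ((toEnd ℂ L (V ⧸ W) x ∘ₗ toEnd ℂ L (V ⧸ W) ⁅y, a⁆) ^ k) (LieSubmodule.Quotient.mk' W v) := by
      intro k
      induction k with
      | zero => intro v; simp
      | succ k ihk =>
        intro v
        rw [pow_succ, pow_succ, Module.End.mul_apply, Module.End.mul_apply, ihk]
        simp only [LinearMap.comp_apply, toEnd_apply_apply, LieModuleHom.map_lie]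
    refine ⟨k + 1, fun v => ?_⟩
    have h1 : ((toEnd ℂ L V x ∘ₗ toEnd ℂ L V ⁅y, a⁆) ^ k) v ∈ W := by
      rw [← LieSubmodule.Quotient.mk_eq_zero, hcomm, hk]
    rw [pow_succ', Module.End.mul_apply, LinearMap.comp_apply, toEnd_apply_apply,
      toEnd_apply_apply, hkill _ h1, lie_zero]

/-- A solvable ideal is orthogonal to the derived algebra for any trace form. -/
theorem traceForm_lie_solvable {L : Type*} [LieRing L] [LieAlgebra ℂ L]
    (A : LieIdeal ℂ L) [IsSolvable A] (V : Type*) [AddCommGroup V] [Module ℂ V] [LieRingModule L V]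
    [LieModule ℂ L V] [FiniteDimensional ℂ V] (x y : L) (a : L) (ha : a ∈ A) :
    traceForm ℂ L V ⁅x, y⁆ a = 0 := by
  obtain ⟨k, hk⟩ := lieRad_nilp_aux A x y a ha _ V le_rfl
  rw [traceForm_apply_lie_apply, traceForm_apply_apply]
  apply IsNilpotent.eq_zero
  apply LinearMap.isNilpotent_trace_of_isNilpotent
  exact ⟨k, LinearMap.ext hk⟩

/-- A Lie algebra with solvable kernel and target is solvable. -/
theorem isSolvable_of_hom {L L' : Type*} [LieRing L] [LieAlgebra ℂ L] [LieRing L']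
    [LieAlgebra ℂ L'] (f : L →ₗ⁅ℂ⁆ L') [IsSolvable L'] [hs : IsSolvable f.ker] : IsSolvable L := by
  obtain ⟨k, hk⟩ := IsSolvable.solvable ℂ L'
  obtain ⟨l, hl⟩ := IsSolvable.solvable ℂ f.ker
  rw [LieIdeal.derivedSeries_eq_bot_iff] at hl
  apply IsSolvable.mk (R := ℂ) (k := l + k)
  rw [derivedSeries_def, derivedSeriesOfIdeal_add, eq_bot_iff, ← hl]
  apply derivedSeriesOfIdeal_mono
  have h := LieIdeal.derivedSeries_map_le (f := f) k
  rw [hk] at h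
  rw [← derivedSeries_def]
  intro x hx
  rw [LieHom.mem_ker]
  have := h (LieIdeal.mem_map hx)
  simpa using this

/-- If the derived algebra lies in a solvable subalgebra, the algebra is solvable. -/
theorem isSolvable_of_lie_mem {L : Type*} [LieRing L] [LieAlgebra ℂ L]
    (H : LieSubalgebra ℂ L) [IsSolvable H] (h : ∀ x y : L, ⁅x, y⁆ ∈ H) : IsSolvable L := by
  have hle : ∀ x ∈ derivedSeries ℂ L 1, x ∈ H := by
    intro x hx
    have : x ∈ (LieIdeal.toLieSubalgebra ℂ L (derivedSeries ℂ L 1)).toSubmodule := hx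
    rw [coe_derivedSeries_one_eq] at this
    refine (Submodule.span_le (p := H.toSubmodule)).mpr ?_ this
    rintro _ ⟨y, z, rfl⟩
    exact h y z
  let f : (derivedSeries ℂ L 1) →ₗ⁅ℂ⁆ H :=
    { toFun := fun x => ⟨x, hle x x.2⟩
      map_add' := fun _ _ => rfl
      map_smul' := fun _ _ => rfl
      map_lie' := rfl }
  have hf : Function.Injective f := fun x y hxy => Subtype.ext (congrArg (fun z : H => (z : L)) hxy)
  have hsol : IsSolvable (derivedSeries ℂ L 1) := hf.lieAlgebra_isSolvable
  obtain ⟨l, hl⟩ := IsSolvable.solvable ℂ (derivedSeries ℂ L 1)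
  rw [LieIdeal.derivedSeries_eq_bot_iff] at hl
  apply IsSolvable.mk (R := ℂ) (k := l + 1)
  rw [derivedSeries_def, derivedSeriesOfIdeal_add, ← derivedSeries_def, hl]

/-- Subalgebras of solvable subalgebras are solvable. -/
theorem isSolvable_of_le {L : Type*} [LieRing L] [LieAlgebra ℂ L]
    {H K : LieSubalgebra ℂ L} (h : H ≤ K) [IsSolvable K] : IsSolvable H :=
  (LieSubalgebra.inclusion_injective h).lieAlgebra_isSolvable

/-- An ideal contained (as a set) in a solvable subalgebra is solvable. -/
theorem isSolvable_ideal_of_le {L : Type*} [LieRing L] [LieAlgebra ℂ L]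
    {I : LieIdeal ℂ L} {K : LieSubalgebra ℂ L} (h : ∀ x ∈ I, x ∈ K) [IsSolvable K] :
    IsSolvable I :=
  isSolvable_of_le (H := LieIdeal.toLieSubalgebra ℂ L I) (K := K) h

/-- Cartan's criterion for subalgebras. -/
theorem isSolvable_of_killing {L : Type*} [LieRing L] [LieAlgebra ℂ L] [FiniteDimensional ℂ L]
    (P : LieSubalgebra ℂ L)
    (h : ∀ x ∈ P, ∀ y ∈ P, ∀ z ∈ P, killingForm ℂ L x ⁅y, z⁆ = 0) : IsSolvable P := by
  set D : LieIdeal ℂ P := derivedSeries ℂ P 1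
  have hD : ∀ x : P, ∀ y ∈ D, killingForm ℂ L x y = 0 := by
    intro x y hy
    have hy' : y ∈ (LieIdeal.toLieSubalgebra ℂ P (derivedSeries ℂ P 1)).toSubmodule := hy
    rw [coe_derivedSeries_one_eq] at hy'
    refine (Submodule.span_le (p := (LinearMap.ker
      ((killingForm ℂ L x).comp P.toSubmodule.subtype)))).mpr ?_ hy'
    rintro _ ⟨u, v, rfl⟩
    simpa using h x x.2 u u.2 v v.2
  have tf : traceForm ℂ D L = 0 := by
    ext ⟨x, hx⟩ ⟨y, hy⟩
    change killingForm ℂ L x y = 0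
    exact hD x y hy
  have nilp := isNilpotent_derivedSeries_of_traceForm_eq_zero tf
  have ring_nilp : LieRing.IsNilpotent (derivedSeries ℂ D 1) := by
    rw [LieAlgebra.isNilpotent_iff_forall (R := ℂ)]
    intro x
    obtain ⟨k, hk⟩ := (isNilpotent_iff_forall' (R := ℂ)).mp nilp x
    refine ⟨k, LinearMap.ext fun y => ?_⟩
    have key : ∀ (k : ℕ) (y : derivedSeries ℂ D 1),
        ((((ad ℂ (derivedSeries ℂ D 1) x) ^ k) y : derivedSeries ℂ D 1) : L) =
        ((toEnd ℂ (derivedSeries ℂ D 1) L x) ^ k) (y : L) := by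
      intro k
      induction k with
      | zero => intro y; rfl
      | succ k ih => 
        intro y
        rw [pow_succ, pow_succ, Module.End.mul_apply, Module.End.mul_apply, ih]
        rfl
    have := key k y
    rw [hk] at this
    apply Subtype.ext; apply Subtype.ext; apply Subtype.ext
    simpa using this
  have : IsSolvable (derivedSeries ℂ D 1) := inferInstance
  obtain ⟨l, hl⟩ := IsSolvable.solvable ℂ (derivedSeries ℂ D 1)
  rw [LieIdeal.derivedSeries_eq_bot_iff] at hl
  have hDs : derivedSeries ℂ D (l + 1) = ⊥ := by
    rw [derivedSeries_def, derivedSeriesOfIdeal_add, ← derivedSeries_def, hl]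
  rw [LieIdeal.derivedSeries_eq_bot_iff] at hDs
  apply IsSolvable.mk (R := ℂ) (k := (l + 1) + 1)
  rw [derivedSeries_def, derivedSeriesOfIdeal_add, ← derivedSeries_def, hDs]

/-- Maximal solvable subalgebras. -/
def MaxSolv {L : Type*} [LieRing L] [LieAlgebra ℂ L] (B : LieSubalgebra ℂ L) : Prop :=
  IsSolvable B ∧ ∀ B' : LieSubalgebra ℂ L, IsSolvable B' → B ≤ B' → B' ≤ B

/-- The subalgebra obtained from `B` by adding one normalizing element. -/
theorem MaxSolv.mem_of_normalizes {L : Type*} [LieRing L] [LieAlgebra ℂ L]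
    {B : LieSubalgebra ℂ L} (hB : MaxSolv B) (x : L) (hx : ∀ b ∈ B, ⁅x, b⁆ ∈ B) : x ∈ B := by
  have key : ∀ y ∈ (Submodule.span ℂ {x} ⊔ B.toSubmodule), ∀ z ∈ (Submodule.span ℂ {x} ⊔ B.toSubmodule),
      ⁅y, z⁆ ∈ B := by
    intro y hy z hz
    obtain ⟨y1, hy1, b, hb, rfl⟩ := Submodule.mem_sup.mp hy
    obtain ⟨z1, hz1, b', hb', rfl⟩ := Submodule.mem_sup.mp hz
    obtain ⟨c, rfl⟩ := Submodule.mem_span_singleton.mp hy1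
    obtain ⟨d, rfl⟩ := Submodule.mem_span_singleton.mp hz1
    have e : ⁅c • x + b, d • x + b'⁆ = c • ⁅x, b'⁆ - d • ⁅x, b⁆ + ⁅b, b'⁆ := by
      simp only [add_lie, lie_add, smul_lie, lie_smul, lie_self, smul_zero, zero_add]
      rw [← lie_skew x b, smul_neg]
      abel
    rw [e]
    exact B.add_mem (B.sub_mem (B.smul_mem _ (hx _ hb')) (B.smul_mem _ (hx _ hb))) (B.lie_mem hb hb')
  let B' : LieSubalgebra ℂ L :=
    { (Submodule.span ℂ {x} ⊔ B.toSubmodule) with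
      lie_mem' := fun {y z} hy hz => (le_sup_right : B.toSubmodule ≤ _) (key y hy z hz) }
  have hle : B ≤ B' := fun y hy => (le_sup_right : B.toSubmodule ≤ _) hy
  have h1 : IsSolvable B' := by
    have := hB.1
    let K : LieSubalgebra ℂ B' := B.comap B'.incl
    have hK : IsSolvable K := by
      let f : K →ₗ⁅ℂ⁆ B :=
        { toFun := fun x => ⟨x.1.1, x.2⟩
          map_add' := fun _ _ => rfl
          map_smul' := fun _ _ => rfl
          map_lie' := rfl }
      have hf : Function.Injective f := fun x y hxy =>
        Subtype.ext (Subtype.ext (congrArg (fun z : B => (z : L)) hxy))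
      exact hf.lieAlgebra_isSolvable
    exact isSolvable_of_lie_mem K (fun y z => key y.1 y.2 z.1 z.2)
  exact hB.2 B' h1 hle ((le_sup_left : Submodule.span ℂ {x} ≤ _) (Submodule.mem_span_singleton_self x))

/-- The quotient map as a Lie algebra morphism. -/
def quotHom {L : Type*} [LieRing L] [LieAlgebra ℂ L] (J : LieIdeal ℂ L) : L →ₗ⁅ℂ⁆ L ⧸ J :=
  { toFun := fun x => LieSubmodule.Quotient.mk x
    map_add' := fun _ _ => rfl
    map_smul' := fun _ _ => rfl
    map_lie' := rfl }

theorem quotHom_eq_zero {L : Type*} [LieRing L] [LieAlgebra ℂ L] (J : LieIdeal ℂ L) (x : L) :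
    quotHom J x = 0 ↔ x ∈ J := LieSubmodule.Quotient.mk_eq_zero'

/-- Restricting a hom to a preimage of a solvable subalgebra. -/
theorem isSolvable_comap {L L' : Type*} [LieRing L] [LieAlgebra ℂ L] [LieRing L']
    [LieAlgebra ℂ L'] (f : L →ₗ⁅ℂ⁆ L') (K : LieSubalgebra ℂ L') [IsSolvable K]
    (hk : IsSolvable f.ker) : IsSolvable (K.comap f) := by
  let F : (K.comap f) →ₗ⁅ℂ⁆ K :=
    { toFun := fun x => ⟨f x.1, x.2⟩
      map_add' := fun _ _ => Subtype.ext (map_add f _ _)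
      map_smul' := fun _ _ => Subtype.ext (map_smul f _ _)
      map_lie' := Subtype.ext (LieHom.map_lie f _ _) }
  have : IsSolvable F.ker := by
    have h0 : ∀ x : F.ker, f x.1.1 = 0 := fun x =>
      congrArg (fun z : K => (z : L')) (LieHom.mem_ker.mp x.2)
    let G : F.ker →ₗ⁅ℂ⁆ f.ker :=
      { toFun := fun x => ⟨x.1.1, LieHom.mem_ker.mpr (h0 x)⟩
        map_add' := fun _ _ => rfl
        map_smul' := fun _ _ => rfl
        map_lie' := rfl }
    have hG : Function.Injective G := fun x y hxy =>
      Subtype.ext (Subtype.ext (congrArg (fun z : f.ker => (z : L)) hxy))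
    exact hG.lieAlgebra_isSolvable
  exact isSolvable_of_hom F

theorem quotHom_ker {L : Type*} [LieRing L] [LieAlgebra ℂ L] (J : LieIdeal ℂ L) :
    (quotHom J).ker = J := by
  ext x
  rw [LieHom.mem_ker, quotHom_eq_zero]

theorem isSolvable_map {L L' : Type*} [LieRing L] [LieAlgebra ℂ L] [LieRing L']
    [LieAlgebra ℂ L'] (f : L →ₗ⁅ℂ⁆ L') (K : LieSubalgebra ℂ L) [IsSolvable K] :
    IsSolvable (K.map f) := by
  let F : K →ₗ⁅ℂ⁆ (K.map f) :=
    { toFun := fun x => ⟨f x.1, ⟨x.1, x.2, rfl⟩⟩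
      map_add' := fun _ _ => Subtype.ext (map_add f _ _)
      map_smul' := fun _ _ => Subtype.ext (map_smul f _ _)
      map_lie' := Subtype.ext (LieHom.map_lie f _ _) }
  have hF : Function.Surjective F := by
    rintro ⟨_, ⟨x, hx, rfl⟩⟩
    exact ⟨⟨x, hx⟩, rfl⟩
  exact hF.lieAlgebra_isSolvable

theorem MaxSolv.ideal_le {L : Type*} [LieRing L] [LieAlgebra ℂ L]
    {B : LieSubalgebra ℂ L} (hB : MaxSolv B) (J : LieIdeal ℂ L) [IsSolvable J] :
    ∀ x ∈ J, x ∈ B := by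
  have := hB.1
  have h1 : IsSolvable (B.map (quotHom J)) := isSolvable_map _ _
  have h2 : IsSolvable ((B.map (quotHom J)).comap (quotHom J)) :=
    isSolvable_comap _ _ (by rw [quotHom_ker]; infer_instance)
  have h3 := hB.2 _ h2 (fun x hx => ⟨x, hx, rfl⟩)
  intro x hx
  refine h3 ?_
  exact ⟨0, B.zero_mem, ((quotHom_eq_zero J x).mpr hx).symm ▸ map_zero (quotHom J)⟩

theorem hasTrivialRadical_quot {L : Type*} [LieRing L] [LieAlgebra ℂ L] [FiniteDimensional ℂ L] :
    HasTrivialRadical ℂ (L ⧸ radical ℂ L) := by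
  apply hasTrivialRadical_of_no_solvable_ideals
  intro I hI
  have h2 : IsSolvable ((LieIdeal.toLieSubalgebra ℂ _ I).comap (quotHom (radical ℂ L))) := by
    have : IsSolvable (LieIdeal.toLieSubalgebra ℂ _ I) := hI
    exact isSolvable_comap _ _ (by rw [quotHom_ker]; infer_instance)
  have h3 : IsSolvable (I.comap (quotHom (radical ℂ L))) := isSolvable_ideal_of_le
    (K := (LieIdeal.toLieSubalgebra ℂ _ I).comap (quotHom (radical ℂ L)))
    (fun x hx => by simpa using hx)
  rw [LieIdeal.solvable_iff_le_radical] at h3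
  rw [eq_bot_iff]
  intro y hy
  obtain ⟨x, rfl⟩ := LieSubmodule.Quotient.surjective_mk' (radical ℂ L) y
  have hx : x ∈ radical ℂ L := h3 (by rw [LieIdeal.mem_comap]; exact hy)
  rw [LieSubmodule.mem_bot]
  exact (LieSubmodule.Quotient.mk_eq_zero _).mpr hx

/-- An ideal containing a maximal solvable subalgebra is everything. -/
theorem MaxSolv.ideal_eq_top {L : Type*} [LieRing L] [LieAlgebra ℂ L] [FiniteDimensional ℂ L]
    {B : LieSubalgebra ℂ L} (hB : MaxSolv B) (I : LieIdeal ℂ L) (hI : ∀ x ∈ B, x ∈ I) :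
    ∀ x, x ∈ I := by
  have htr : HasTrivialRadical ℂ (L ⧸ radical ℂ L) := hasTrivialRadical_quot
  have : FiniteDimensional ℂ (L ⧸ radical ℂ L) :=
    inferInstanceAs (FiniteDimensional ℂ (L ⧸ (radical ℂ L).toSubmodule))
  have hRB := hB.ideal_le (radical ℂ L)
  have hsurj : Function.Surjective (quotHom (radical ℂ L)) :=
    LieSubmodule.Quotient.surjective_mk' (radical ℂ L)
  have hmem : ∀ y ∈ I.map (quotHom (radical ℂ L)), ∃ x ∈ I, quotHom (radical ℂ L) x = y := by
    intro y hy
    obtain ⟨x, hx⟩ := LieIdeal.mem_map_of_surjective hsurj hy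
    exact ⟨x, x.2, hx⟩
  obtain hC := LieIdeal.isCompl_killingCompl (I.map (quotHom (radical ℂ L)))
  set C := (I.map (quotHom (radical ℂ L))).killingCompl ℂ (L ⧸ radical ℂ L)
  have hCB : ∀ x, quotHom (radical ℂ L) x ∈ C → x ∈ B := by
    intro x hx
    apply hB.mem_of_normalizes
    intro b hb
    apply hRB
    rw [← quotHom_eq_zero]
    have h1 : quotHom (radical ℂ L) ⁅x, b⁆ ∈ C := by
      rw [LieHom.map_lie, ← lie_skew]
      exact neg_mem (C.lie_mem hx)
    have h2 : quotHom (radical ℂ L) ⁅x, b⁆ ∈ I.map (quotHom (radical ℂ L)) :=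
      LieIdeal.mem_map (I.lie_mem (hI b hb))
    have h3 : quotHom (radical ℂ L) ⁅x, b⁆ ∈ I.map (quotHom (radical ℂ L)) ⊓ C := ⟨h2, h1⟩
    rw [hC.inf_eq_bot] at h3
    simpa using h3
  intro x
  have hx : quotHom (radical ℂ L) x ∈ I.map (quotHom (radical ℂ L)) ⊔ C := by
    rw [hC.sup_eq_top]; trivial
  rw [LieSubmodule.mem_sup] at hx
  obtain ⟨y, hy, z, hz, hyz⟩ := hx
  obtain ⟨y', hy', rfl⟩ := hmem y hy
  have h1 : x - y' ∈ B := by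
    apply hCB
    rw [map_sub, ← hyz, add_sub_cancel_left]
    exact hz
  have := I.add_mem (hI _ h1) hy'
  simpa using this

theorem MaxSolv.restrict {L : Type*} [LieRing L] [LieAlgebra ℂ L]
    {B : LieSubalgebra ℂ L} (hB : MaxSolv B) (M : LieSubalgebra ℂ L) (hM : B ≤ M) :
    MaxSolv (B.comap M.incl) := by
  have := hB.1
  constructor
  · let f : (B.comap M.incl) →ₗ⁅ℂ⁆ B :=
        { toFun := fun x => ⟨x.1.1, x.2⟩
          map_add' := fun _ _ => rfl
          map_smul' := fun _ _ => rfl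
          map_lie' := rfl }
    have hf : Function.Injective f := fun x y hxy =>
        Subtype.ext (Subtype.ext (congrArg (fun z : B => (z : L)) hxy))
    exact hf.lieAlgebra_isSolvable
  · intro B' hB' hle x hx
    have h1 : IsSolvable (B'.map M.incl) := isSolvable_map _ _
    have h2 := hB.2 _ h1 (fun y hy => ⟨⟨y, hM hy⟩, hle (show y ∈ B from hy), rfl⟩)
    exact h2 ⟨x, hx, rfl⟩

/-- Subalgebras containing a maximal solvable subalgebra are self-normalizing. -/
theorem MaxSolv.self_normalizing {L : Type*} [LieRing L] [LieAlgebra ℂ L] [FiniteDimensional ℂ L]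
    {B : LieSubalgebra ℂ L} (hB : MaxSolv B) (Q : LieSubalgebra ℂ L) (hQ : B ≤ Q) (x : L)
    (hx : ∀ y ∈ Q, ⁅x, y⁆ ∈ Q) : x ∈ Q := by
  let M := Q.normalizer
  have hQM : Q ≤ M := Q.le_normalizer
  let I : LieIdeal ℂ M :=
    { (Q.toSubmodule.comap M.toSubmodule.subtype) with
      lie_mem := fun {x m} hm => (LieSubalgebra.mem_normalizer_iff Q x.1).mp x.2 m.1 hm }
  have h := (hB.restrict M (hQ.trans hQM)).ideal_eq_top I (fun y hy => hQ hy)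
  exact h ⟨x, (LieSubalgebra.mem_normalizer_iff Q x).mpr hx⟩

/-- The orthogonal of a maximal solvable subalgebra is contained in it. -/
theorem MaxSolv.orth_mem {L : Type*} [LieRing L] [LieAlgebra ℂ L] [FiniteDimensional ℂ L]
    {B : LieSubalgebra ℂ L} (hB : MaxSolv B) (x : L) (hx : ∀ y ∈ B, killingForm ℂ L x y = 0) :
    x ∈ B := by
  have hsolv := hB.1
  let U : LieSubmodule ℂ B L :=
    { carrier := {x | ∀ y ∈ B, killingForm ℂ L x y = 0}
      zero_mem' := fun y _ => by simp
      add_mem' := fun {a b} ha hb y hy => by simp [ha y hy, hb y hy]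
      smul_mem' := fun c a ha y hy => by simp [ha y hy]
      lie_mem := fun {b m} hm y hy => by
        change killingForm ℂ L ⁅b.1, m⁆ y = 0
        rw [traceForm_apply_lie_apply', hm _ (B.lie_mem b.2 hy), neg_zero] }
  let W : LieSubmodule ℂ B U :=
    { (B.toSubmodule.comap U.toSubmodule.subtype) with
      lie_mem := fun {b m} hm => B.lie_mem b.2 hm }
  rcases subsingleton_or_nontrivial (U ⧸ W) with h | h
  · have : LieSubmodule.Quotient.mk' W ⟨x, hx⟩ = 0 := Subsingleton.elim _ _
    rw [LieSubmodule.Quotient.mk_eq_zero] at this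
    exact this
  exfalso
  have : FiniteDimensional ℂ (U ⧸ W) :=
    inferInstanceAs (FiniteDimensional ℂ (U ⧸ W.toSubmodule))
  obtain ⟨χ, hχ⟩ := exists_nontrivial_weightSpace_of_isSolvable ℂ B (U ⧸ W)
  obtain ⟨⟨v, hv⟩, hv0⟩ := exists_ne (0 : weightSpace (U ⧸ W) χ)
  obtain ⟨⟨u, hu⟩, rfl⟩ := LieSubmodule.Quotient.surjective_mk' W v
  have huB : u ∉ B := by
    intro huB
    apply hv0
    apply Subtype.ext
    exact (LieSubmodule.Quotient.mk_eq_zero _).mpr huB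
  rw [mem_weightSpace] at hv
  have hrel : ∀ (b : L) (hb : b ∈ B), ⁅b, u⁆ - χ ⟨b, hb⟩ • u ∈ B := by
    intro b hb
    have h1 := hv ⟨b, hb⟩
    have h2 : LieSubmodule.Quotient.mk' W
        (⁅(⟨b, hb⟩ : B), (⟨u, hu⟩ : U)⁆ - χ ⟨b, hb⟩ • (⟨u, hu⟩ : U)) = 0 := by
      rw [map_sub, LieModuleHom.map_lie, h1, map_smul, sub_self]
    rw [LieSubmodule.Quotient.mk_eq_zero] at h2
    exact h2
  have hform : ∀ y ∈ (Submodule.span ℂ {u} ⊔ B.toSubmodule), ∃ (c : ℂ) (b : L), b ∈ B ∧ y = c • u + b := by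
    intro y hy
    obtain ⟨y1, hy1, b, hb, rfl⟩ := Submodule.mem_sup.mp hy
    obtain ⟨c, rfl⟩ := Submodule.mem_span_singleton.mp hy1
    exact ⟨c, b, hb, rfl⟩
  have hform' : ∀ (c : ℂ) (b : L), b ∈ B → c • u + b ∈ (Submodule.span ℂ {u} ⊔ B.toSubmodule) := by
    intro c b hb
    exact Submodule.mem_sup.mpr ⟨_, Submodule.mem_span_singleton.mpr ⟨c, rfl⟩, b, hb, rfl⟩
  have e : ∀ (c d : ℂ) (b b' : L), ⁅c • u + b, d • u + b'⁆ = d • ⁅b, u⁆ - c • ⁅b', u⁆ + ⁅b, b'⁆ := by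
    intro c d b b'
    simp only [add_lie, lie_add, smul_lie, lie_smul, lie_self, smul_zero, zero_add]
    rw [← lie_skew b' u, smul_neg]
    abel
  have hsp : ∀ b ∈ B, ⁅b, u⁆ ∈ (Submodule.span ℂ {u} ⊔ B.toSubmodule) := by
    intro b hb
    have := hform' (χ ⟨b, hb⟩) _ (hrel b hb)
    rwa [add_sub_cancel] at this
  let P : LieSubalgebra ℂ L :=
    { (Submodule.span ℂ {u} ⊔ B.toSubmodule) with
      lie_mem' := fun {y z} hy hz => by
        obtain ⟨c, b, hb, rfl⟩ := hform y hy
        obtain ⟨d, b', hb', rfl⟩ := hform z hz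
        change _ ∈ (Submodule.span ℂ {u} ⊔ B.toSubmodule)
        rw [e]
        refine Submodule.add_mem _ (Submodule.sub_mem _ (Submodule.smul_mem _ _ (hsp b hb))
          (Submodule.smul_mem _ _ (hsp b' hb'))) ?_
        exact (le_sup_right : B.toSubmodule ≤ _) (B.lie_mem hb hb') }
  have hBB : ∀ b1 ∈ B, ∀ b2 ∈ B, ∀ b3 ∈ B, killingForm ℂ L b1 ⁅b2, b3⁆ = 0 := by
    intro b1 h1 b2 h2 b3 h3
    have hs : IsSolvable (⊤ : LieIdeal ℂ B) := inferInstance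
    have := traceForm_lie_solvable (⊤ : LieIdeal ℂ B) L ⟨b2, h2⟩ ⟨b3, h3⟩ ⟨b1, h1⟩ trivial
    rw [traceForm_comm] at this
    exact this
  have k1 : ∀ b1 ∈ B, ∀ b2 ∈ B, killingForm ℂ L b1 ⁅b2, u⁆ = 0 := by
    intro b1 h1 b2 h2
    rw [← traceForm_apply_lie_apply, traceForm_comm]
    exact hu _ (B.lie_mem h1 h2)
  have k2 : ∀ b ∈ B, killingForm ℂ L u ⁅b, u⁆ = 0 := by
    intro b hb
    rw [traceForm_comm, traceForm_apply_lie_apply, lie_self, map_zero]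
  have k3 : ∀ b1 ∈ B, ∀ b2 ∈ B, killingForm ℂ L u ⁅b1, b2⁆ = 0 := fun b1 h1 b2 h2 =>
    hu _ (B.lie_mem h1 h2)
  have hP : IsSolvable P := by
    apply isSolvable_of_killing
    intro x1 h1 x2 h2 x3 h3
    obtain ⟨c1, b1, hb1, rfl⟩ := hform x1 h1
    obtain ⟨c2, b2, hb2, rfl⟩ := hform x2 h2
    obtain ⟨c3, b3, hb3, rfl⟩ := hform x3 h3
    rw [e]
    simp only [map_add, map_sub, map_smul, LinearMap.add_apply, LinearMap.smul_apply,
      hBB b1 hb1 b2 hb2 b3 hb3, k1 b1 hb1 b2 hb2, k1 b1 hb1 b3 hb3, k2 b2 hb2, k2 b3 hb3,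
      k3 b2 hb2 b3 hb3]
    simp
  exact huB (hB.2 P hP (fun y hy => (le_sup_right : B.toSubmodule ≤ _) hy)
    ((le_sup_left : Submodule.span ℂ {u} ≤ _) (Submodule.mem_span_singleton_self u)))

/-- Double orthogonal for a possibly degenerate symmetric form. -/
theorem double_orth {V : Type*} [AddCommGroup V] [Module ℂ V] [FiniteDimensional ℂ V]
    (F : LinearMap.BilinForm ℂ V) (hF : F.IsRefl) (W : Submodule ℂ V)
    (hW : F.orthogonal ⊤ ≤ W) : F.orthogonal (F.orthogonal W) = W := by
  symm
  apply Submodule.eq_of_le_of_finrank_le (LinearMap.BilinForm.le_orthogonal_orthogonal hF)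
  have h1 := LinearMap.BilinForm.finrank_add_finrank_orthogonal hF W
  have h2 := LinearMap.BilinForm.finrank_add_finrank_orthogonal hF (F.orthogonal W)
  rw [inf_eq_right.mpr hW] at h1
  rw [inf_eq_right.mpr (LinearMap.BilinForm.orthogonal_le le_top)] at h2
  omega

theorem normalizer_core {L : Type*} [LieRing L] [LieAlgebra ℂ L] [FiniteDimensional ℂ L]
    (hred : ∀ x : L, (∀ y, killingForm ℂ L x y = 0) → ∀ y : L, ⁅x, y⁆ = 0)
    {B : LieSubalgebra ℂ L} (hB : MaxSolv B) (Q : LieSubalgebra ℂ L) (hQ : B ≤ Q)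
    (n : Submodule ℂ L) (hnB : n ≤ B.toSubmodule)
    (hnQ : ∀ x ∈ Q, ∀ y ∈ n, ⁅x, y⁆ ∈ n)
    (hn : ∀ J : Submodule ℂ L, J ≤ B.toSubmodule → (∀ x ∈ Q, ∀ y ∈ J, ⁅x, y⁆ ∈ J) →
      ∀ v ∈ J, v ∈ Submodule.span ℂ {z : L | ∃ x ∈ Q, ∃ y ∈ Q, ⁅x, y⁆ = z} → v ∈ n)
    (x : L) (hx : ∀ w ∈ n, ⁅x, w⁆ ∈ n) : x ∈ Q := by
  have hsolv := hB.1
  let F : LinearMap.BilinForm ℂ L := killingForm ℂ L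
  have hsymm : ∀ x y, F x y = F y x := traceForm_comm ℂ L L
  have hinv : ∀ x y z, F ⁅x, y⁆ z = F x ⁅y, z⁆ := traceForm_apply_lie_apply ℂ L L
  have hrefl : F.IsRefl := fun a b h => by rw [hsymm]; exact h
  have mem_orth : ∀ (S : Submodule ℂ L) (a : L), a ∈ F.orthogonal S ↔ ∀ s ∈ S, F s a = 0 :=
    fun S a => Iff.rfl
  let Z : Submodule ℂ L := F.orthogonal ⊤
  have hZ : ∀ z ∈ Z, ∀ y, F y z = 0 := fun z hz y => hz y trivial
  have hZ' : ∀ z ∈ Z, ∀ y : L, ⁅z, y⁆ = 0 := fun z hz =>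
    hred z (fun y => by rw [traceForm_comm]; exact hZ z hz y)
  have hZB : Z ≤ B.toSubmodule := fun z hz =>
    hB.mem_of_normalizes z (fun b _ => by rw [hZ' z hz]; exact B.zero_mem)
  have hBQ : B.toSubmodule ≤ Q.toSubmodule := hQ
  let U : Submodule ℂ L := F.orthogonal Q.toSubmodule
  have hUB : U ≤ B.toSubmodule := fun u hu =>
    hB.orth_mem u (fun y hy => by rw [traceForm_comm]; exact hu y (hQ hy))
  have hUQ : ∀ x ∈ Q, ∀ y ∈ U, ⁅x, y⁆ ∈ U := by
    intro x hx y hy q hq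
    change F q ⁅x, y⁆ = 0
    rw [← hinv]
    exact hy _ (Q.lie_mem hq hx)
  let D : Submodule ℂ L := Submodule.span ℂ {z : L | ∃ x ∈ Q, ∃ y ∈ Q, ⁅x, y⁆ = z}
  have hDQ : F.orthogonal (D ⊔ Z) ≤ Q.toSubmodule := by
    intro y hy
    apply hB.self_normalizing Q hQ
    intro p hp
    apply hBQ
    apply hUB
    intro p' hp'
    change F p' ⁅y, p⁆ = 0
    rw [hsymm, hinv, hsymm]
    exact hy _ ((le_sup_left : D ≤ _) (Submodule.subset_span ⟨p, hp, p', hp', rfl⟩))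
  have hUD : U ≤ D ⊔ Z := by
    rw [← double_orth F hrefl (D ⊔ Z) le_sup_right]
    exact LinearMap.BilinForm.orthogonal_le hDQ
  have hUn : U ≤ n ⊔ Z := by
    intro u hu
    obtain ⟨v, hv, z, hz, rfl⟩ := Submodule.mem_sup.mp (hUD hu)
    refine Submodule.mem_sup.mpr ⟨v, ?_, z, hz, rfl⟩
    refine hn U hUB hUQ v ?_ hv
    have : z ∈ U := LinearMap.BilinForm.orthogonal_le le_top hz
    simpa using U.sub_mem hu this
  have hQU : F.orthogonal U = Q.toSubmodule := double_orth F hrefl _ (hZB.trans hBQ)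
  let N : LieSubalgebra ℂ L :=
    { carrier := {x | ∀ w ∈ n, ⁅x, w⁆ ∈ n}
      zero_mem' := fun w _ => by simp
      add_mem' := fun {a b} ha hb w hw => by
        rw [add_lie]; exact n.add_mem (ha w hw) (hb w hw)
      smul_mem' := fun c a ha w hw => by
        rw [smul_lie]; exact n.smul_mem c (ha w hw)
      lie_mem' := fun {a b} ha hb w hw => by
        rw [lie_lie]; exact n.sub_mem (ha _ (hb w hw)) (hb _ (ha w hw)) }
  have hQN : Q ≤ N := fun a ha => hnQ a ha
  have hnN : n ≤ N.toSubmodule := (hnB.trans hBQ).trans hQN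
  let A : LieIdeal ℂ N :=
    { (n.comap N.toSubmodule.subtype) with
      lie_mem := fun {a m} hm => a.2 m.1 hm }
  have hA : IsSolvable A := by
    have := (hB.restrict N (hQ.trans hQN)).1
    exact isSolvable_ideal_of_le (K := B.comap N.incl) (fun a ha => hnB ha)
  have hNN : ∀ a ∈ N, ∀ b ∈ N, ⁅a, b⁆ ∈ Q := by
    intro a ha b hb
    change ⁅a, b⁆ ∈ Q.toSubmodule
    rw [← hQU]
    intro u hu
    change F u ⁅a, b⁆ = 0
    obtain ⟨v, hv, z, hz, rfl⟩ := Submodule.mem_sup.mp (hUn hu)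
    have h1 : F ⁅a, b⁆ v = 0 :=
      traceForm_lie_solvable A L ⟨a, ha⟩ ⟨b, hb⟩ ⟨v, hnN hv⟩ hv
    rw [hsymm, map_add, h1, hZ z hz, add_zero]
  exact hB.self_normalizing Q hQ x (fun y hy => hNN x hx y (hQN hy))

end generic

section bridge

theorem derivedSub_eq (H : LieSubalgebra ℂ g) (k : ℕ) :
    derivedSub g H.toSubmodule k =
      (LieAlgebra.derivedSeries ℂ H k).toSubmodule.map H.toSubmodule.subtype := by
  induction k with
  | zero =>
    simp [derivedSub]
  | succ k ih =>
    have e : LieAlgebra.derivedSeries ℂ H (k + 1) =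
        ⁅LieAlgebra.derivedSeries ℂ H k, LieAlgebra.derivedSeries ℂ H k⁆ :=
      LieAlgebra.derivedSeriesOfIdeal_succ ℂ H ⊤ k
    rw [derivedSub, ih, e, LieSubmodule.lieIdeal_oper_eq_linear_span',
      Submodule.map_span, bracketSpan]
    congr 1
    ext z
    constructor
    · rintro ⟨_, ⟨x, hx, rfl⟩, _, ⟨y, hy, rfl⟩, rfl⟩
      exact ⟨(show H from ⁅(show H from x), (show H from y)⁆), ⟨x, hx, y, hy, rfl⟩, rfl⟩
    · rintro ⟨_, ⟨x, hx, y, hy, rfl⟩, rfl⟩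
      exact ⟨_, ⟨x, hx, rfl⟩, _, ⟨y, hy, rfl⟩, rfl⟩

theorem solvableSub_iff (H : LieSubalgebra ℂ g) :
    SolvableSub g H.toSubmodule ↔ LieAlgebra.IsSolvable H := by
  have key : ∀ k, derivedSub g H.toSubmodule k = ⊥ ↔ LieAlgebra.derivedSeries ℂ H k = ⊥ := by
    intro k
    rw [derivedSub_eq, ← LieSubmodule.toSubmodule_eq_bot]
    constructor
    · intro h
      exact (Submodule.map_injective_of_injective H.toSubmodule.injective_subtype)
        (h.trans (Submodule.map_bot _).symm)
    · intro h
      rw [h]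
      exact Submodule.map_bot _
  constructor
  · rintro ⟨k, hk⟩
    exact LieAlgebra.IsSolvable.mk ((key k).mp hk)
  · intro h
    obtain ⟨k, hk⟩ := LieAlgebra.IsSolvable.solvable ℂ H
    exact ⟨k, (key k).mpr hk⟩

/-- A subspace closed under brackets, as a Lie subalgebra. -/
def toLieSub (V : Submodule ℂ g) (hV : IsSub g V) : LieSubalgebra ℂ g :=
  { V with lie_mem' := fun {x y} hx hy => hV x hx y hy }

theorem toLieSub_toSubmodule (V : Submodule ℂ g) (hV : IsSub g V) :
    (toLieSub g V hV).toSubmodule = V := rfl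

theorem solvableSub_iff' (V : Submodule ℂ g) (hV : IsSub g V) :
    SolvableSub g V ↔ LieAlgebra.IsSolvable (toLieSub g V hV) :=
  solvableSub_iff g (toLieSub g V hV)

theorem maxSolv_of_borel (b : Submodule ℂ g) (hb : IsBorelIn g ⊤ b) :
    MaxSolv (toLieSub g b hb.1) := by
  refine ⟨(solvableSub_iff' g b hb.1).mp hb.2.2.1, ?_⟩
  intro B' hB' hle x hx
  have h := hb.2.2.2 B'.toSubmodule (fun x hx y hy => B'.lie_mem hx hy) le_top
    ((solvableSub_iff g B').mpr hB') hle
  change x ∈ b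
  rw [← h]
  exact hx

theorem bracketSpan_le (q : Submodule ℂ g) (hq : IsSub g q) : bracketSpan g q q ≤ q := by
  refine Submodule.span_le.mpr ?_
  rintro _ ⟨x, hx, y, hy, rfl⟩
  exact hq x hx y hy

theorem radicalIn_stable (q : Submodule ℂ g) (x : g) (hx : x ∈ q) (y : g)
    (hy : y ∈ radicalIn g q) : ⁅x, y⁆ ∈ radicalIn g q := by
  have h : radicalIn g q ≤ (radicalIn g q).comap (LieAlgebra.ad ℂ g x) := by
    refine sSup_le ?_
    intro J hJ z hz
    exact (le_sSup hJ : J ≤ radicalIn g q) (hJ.1.2 x hx z hz)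
  exact h hy

theorem nilpotentRadIn_stable (q : Submodule ℂ g) (hq : IsSub g q) (x : g) (hx : x ∈ q) (y : g)
    (hy : y ∈ nilpotentRadIn g q) : ⁅x, y⁆ ∈ nilpotentRadIn g q :=
  ⟨Submodule.subset_span ⟨x, hx, y, bracketSpan_le g q hq hy.1, rfl⟩,
    radicalIn_stable g q x hx y hy.2⟩

theorem radicalIn_le_borel (q b : Submodule ℂ g) (hq : IsSub g q) (hb : IsBorelIn g ⊤ b)
    (hbq : b ≤ q) : radicalIn g q ≤ b := by
  refine sSup_le ?_
  rintro J ⟨⟨hJq, hJ⟩, hJs⟩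
  have hJsub : IsSub g J := fun x hx y hy => hJ x (hJq hx) y hy
  have hB := maxSolv_of_borel g b hb
  have hsol := (solvableSub_iff' g J hJsub).mp hJs
  let Q := toLieSub g q hq
  have hBr := hB.restrict Q hbq
  let I : LieIdeal ℂ Q :=
    { (J.comap Q.toSubmodule.subtype) with
      lie_mem := fun {a m} hm => hJ a.1 a.2 m.1 hm }
  have hI : LieAlgebra.IsSolvable I := by
    let f : I →ₗ⁅ℂ⁆ (toLieSub g J hJsub) :=
      { toFun := fun a => ⟨a.1.1, a.2⟩
        map_add' := fun a b => rfl
        map_smul' := fun c a => rfl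
        map_lie' := fun {a b} => rfl }
    have hf : Function.Injective f := by
      intro a b hab
      apply Subtype.ext
      apply Subtype.ext
      exact congrArg (fun z : toLieSub g J hJsub => (z : g)) hab
    exact hf.lieAlgebra_isSolvable
  intro x hx
  have := hBr.ideal_le I
  exact this ⟨x, hJq hx⟩ hx

theorem reductive_killing (hred : IsReductive g) (x : g)
    (hx : ∀ y, killingForm ℂ g x y = 0) (y : g) : ⁅x, y⁆ = 0 := by
  have h1 : x ∈ LieAlgebra.radical ℂ g := by
    apply LieAlgebra.killingCompl_top_le_radical ℂ g
    rw [LieIdeal.mem_killingCompl]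
    intro z _
    rw [LieModule.traceForm_comm]
    exact hx z
  have h2 : x ∈ radicalIn g ⊤ := by
    refine (le_sSup ?_ : (LieAlgebra.radical ℂ g).toSubmodule ≤ radicalIn g ⊤) h1
    refine ⟨⟨le_top, fun a _ b hb => (LieAlgebra.radical ℂ g).lie_mem hb⟩, ?_⟩
    refine (solvableSub_iff g (LieIdeal.toLieSubalgebra ℂ g (LieAlgebra.radical ℂ g))).mpr ?_
    exact inferInstanceAs (LieAlgebra.IsSolvable (LieAlgebra.radical ℂ g))
  rw [hred] at h2
  exact h2.2 y trivial

end bridge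

/-- (1.17) in Delorme.
Every parabolic subalgebra `q` of a finite-dimensional complex reductive Lie algebra `g`
equals the normalizer in `g` of its own nilpotent radical. -/
theorem parabolic_eq_normalizer_of_nilpotent_radical
    (g : Type*) [LieRing g] [LieAlgebra ℝ g] [LieAlgebra ℂ g] [IsScalarTower ℝ ℂ g]
    [FiniteDimensional ℂ g] [FiniteDimensional ℝ g]
    (hred : IsReductive g)
    (q : Submodule ℂ g) (hq : IsParabolicIn g ⊤ q) :
    ∀ x : g, x ∈ q ↔ ∀ w ∈ nilpotentRadIn g q, ⁅x, w⁆ ∈ nilpotentRadIn g q := by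
  obtain ⟨hqs, _, b, hb, hbq⟩ := hq
  intro x
  constructor
  · intro hx w hw
    exact nilpotentRadIn_stable g q hqs x hx w hw
  · intro hx
    have hB := maxSolv_of_borel g b hb
    refine normalizer_core (reductive_killing g hred) hB (toLieSub g q hqs) hbq
      (nilpotentRadIn g q) ?_ (fun a ha y hy => nilpotentRadIn_stable g q hqs a ha y hy)
      ?_ x hx
    · exact inf_le_right.trans (radicalIn_le_borel g q b hqs hb hbq)
    · intro J hJb hJ v hv hvD
      refine ⟨hvD, ?_⟩
      refine (le_sSup ?_ : J ≤ radicalIn g q) hv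
      have hJsub : IsSub g J := fun x hx y hy => hJ x (hbq (hJb hx)) y hy
      refine ⟨⟨fun z hz => hbq (hJb hz), hJ⟩, ?_⟩
      rw [solvableSub_iff' g J hJsub]
      have := hB.1
      exact isSolvable_of_le (K := toLieSub g b hb.1) hJb

end ManinPaper
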